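/- For all integers m ≥ 1 and k ≥ 1 there exists a constant C > 0 such that for every integer ν ≥ 1, every open set Ω ⊆ ℝ^m, every bounded k-times continuously differentiable map u : Ω → ℝ^ν, every r > 0 and every x ∈ Ω with the open ball B_r(x) contained in Ω, one has ‖Du(x)‖ ≤ C ( (sup_{Ω}‖u‖)/r + r^{k−1} (M‖D^k u‖)(x) ). -/

import Mathlib

open MeasureTheory Filter Topology ENNReal

/-- The maximal function of `f : Ω → [0,∞]`:
`(Mf)(x) = sup_{r>0} λ(B_r(x))⁻¹ ∫_{Ω ∩ B_r(x)} f`. -/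
noncomputable def maximalFn {m : ℕ} (Ω : Set (EuclideanSpace ℝ (Fin m)))
    (f : EuclideanSpace ℝ (Fin m) → ℝ≥0∞) (x : EuclideanSpace ℝ (Fin m)) : ℝ≥0∞ :=
  ⨆ (r : ℝ) (_ : 0 < r),
    (volume (Metric.ball x r))⁻¹ * ∫⁻ y in Ω ∩ Metric.ball x r, f y

theorem aux_taylor {E : Type*} [NormedAddCommGroup E] [NormedSpace ℝ E] [CompleteSpace E]
    (k : ℕ) : ∀ (h : ℕ → ℝ → E),
    (∀ j ≤ k, ∀ t ∈ Set.Icc (0:ℝ) 1, HasDerivAt (h j) (h (j+1) t) t) →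
    ContinuousOn (h (k+1)) (Set.Icc 0 1) → ∀ t ∈ Set.Icc (0:ℝ) 1,
    ‖h 0 t - ∑ j ∈ Finset.range (k+1), (t^j / (j.factorial : ℝ)) • h j 0‖
      ≤ ∫ s in (0:ℝ)..1, ‖h (k+1) s‖ := by
  induction k with
  | zero =>
    intro h hd hc t ht
    have hsub : Set.uIcc 0 t ⊆ Set.Icc (0:ℝ) 1 := by
      rw [Set.uIcc_of_le ht.1]; exact Set.Icc_subset_Icc le_rfl ht.2
    have hci : IntervalIntegrable (h 1) volume 0 t :=
      (hc.mono hsub).intervalIntegrable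
    have h1 := intervalIntegral.integral_eq_sub_of_hasDerivAt
      (fun s hs => hd 0 le_rfl s (hsub hs)) hci
    have hci2 : IntervalIntegrable (fun s => ‖h 1 s‖) volume 0 1 := by
      apply ContinuousOn.intervalIntegrable
      rw [Set.uIcc_of_le zero_le_one]; exact hc.norm
    simp only [zero_add, Finset.range_one, Finset.sum_singleton, pow_zero, Nat.factorial_zero,
      Nat.cast_one, div_one, one_smul]
    rw [← h1]
    refine (intervalIntegral.norm_integral_le_integral_norm ht.1).trans ?_
    exact intervalIntegral.integral_mono_interval le_rfl ht.1 ht.2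
      (Eventually.of_forall fun s => norm_nonneg _) hci2
  | succ k ih =>
    intro h hd hc t ht
    have ih' := ih (fun j => h (j+1)) (fun j hj s hs => hd (j+1) (by omega) s hs) hc
    set I := ∫ s in (0:ℝ)..1, ‖h (k+1+1) s‖ with hI
    have hI0 : 0 ≤ I := intervalIntegral.integral_nonneg zero_le_one fun s _ => norm_nonneg _
    have key := (convex_Icc (0:ℝ) 1).norm_image_sub_le_of_norm_hasDerivWithin_le
      (f := fun t => h 0 t - ∑ j ∈ Finset.range (k+1+1), (t^j / (j.factorial : ℝ)) • h j 0)
      (f' := fun t => h 1 t - ∑ j ∈ Finset.range (k+1), (t^j / (j.factorial : ℝ)) • h (j+1) 0)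
      (C := I) (x := 0) (y := t) ?_ ih' (by simp) ht
    · have e0 : ∑ j ∈ Finset.range (k+1+1), ((0:ℝ)^j / (j.factorial : ℝ)) • h j 0 = h 0 0 := by
        rw [Finset.sum_range_succ']; simp
      simp only [e0, sub_self, sub_zero] at key
      refine key.trans ?_
      rw [Real.norm_eq_abs, abs_of_nonneg ht.1]
      exact mul_le_of_le_one_right hI0 ht.2
    · intro s hs
      refine HasDerivAt.hasDerivWithinAt ?_
      refine (hd 0 (by omega) s hs).sub ?_
      have : ∀ j ∈ Finset.range (k+1+1), HasDerivAt (fun t : ℝ => (t^j / (j.factorial : ℝ)) • h j 0)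
          (((j * s^(j-1)) / (j.factorial : ℝ)) • h j 0) s := fun j _ =>
        ((hasDerivAt_pow j s).div_const _).smul_const _
      have h2 := HasDerivAt.fun_sum this
      convert h2 using 1
      rw [Finset.sum_range_succ' _ (k+1)]
      simp only [Nat.cast_zero, zero_mul, zero_div, zero_smul, add_zero]
      refine Finset.sum_congr rfl fun j _ => ?_
      congr 1
      rw [Nat.factorial_succ]
      have : (j.factorial : ℝ) ≠ 0 := by positivity
      push_cast
      try simp only [Nat.add_sub_cancel]
      field_simp

theorem aux_coef (k : ℕ) : ∃ (a : Fin (k+2) → ℝ) (v : Fin (k+2) → ℝ),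
    (∀ i, v i ∈ Set.Icc (0:ℝ) 1) ∧
    ∀ j : Fin (k+2), ∑ i, a i * v i ^ (j:ℕ) = if j = 1 then 1 else 0 := by
  let v : Fin (k+2) → ℝ := fun i => (i:ℕ) / ((k:ℝ)+2)
  have hv : Function.Injective v := by
    intro i j hij
    have : ((k:ℝ)+2) ≠ 0 := by positivity
    simp only [v] at hij
    field_simp at hij
    exact Fin.ext (by exact_mod_cast hij)
  have hu : IsUnit (Matrix.vandermonde v) := by
    rw [Matrix.isUnit_iff_isUnit_det]
    exact (Matrix.det_vandermonde_ne_zero_iff.2 hv).isUnit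
  obtain ⟨a, ha⟩ := Matrix.vecMul_surjective_iff_isUnit.2 hu (fun j => if j = 1 then 1 else 0)
  refine ⟨a, v, fun i => ⟨by positivity, ?_⟩, fun j => ?_⟩
  · simp only [v]
    rw [div_le_one (by positivity)]
    have := i.2
    have h2 : ((i:ℕ):ℝ) < ((k+2 : ℕ):ℝ) := by exact_mod_cast this
    push_cast at h2; linarith
  · have := congrFun ha j
    simpa [Matrix.vecMul, dotProduct, Matrix.vandermonde_apply] using this

theorem aux_landau (k : ℕ) : ∃ A : ℝ, 0 < A ∧ ∀ (E : Type) [NormedAddCommGroup E]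
    [NormedSpace ℝ E] [CompleteSpace E] (h : ℕ → ℝ → E) (S : ℝ),
    (∀ j ≤ k+1, ∀ t ∈ Set.Icc (0:ℝ) 1, HasDerivAt (h j) (h (j+1) t) t) →
    ContinuousOn (h (k+2)) (Set.Icc 0 1) → (∀ t ∈ Set.Icc (0:ℝ) 1, ‖h 0 t‖ ≤ S) →
    ‖h 1 0‖ ≤ A * (S + ∫ s in (0:ℝ)..1, ‖h (k+2) s‖) := by
  obtain ⟨a, v, hv, hav⟩ := aux_coef k
  refine ⟨∑ i, |a i| + 1, by positivity, ?_⟩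
  intro E _ _ _ h S hd hc hS
  set I := ∫ s in (0:ℝ)..1, ‖h (k+2) s‖ with hI
  have hI0 : 0 ≤ I := intervalIntegral.integral_nonneg zero_le_one fun s _ => norm_nonneg _
  have hS0 : 0 ≤ S := (norm_nonneg _).trans (hS 0 (by simp))
  have hT := aux_taylor (k+1) h hd hc
  have e : h 1 0 = ∑ i, a i • (h 0 (v i) - (h 0 (v i) -
      ∑ j ∈ Finset.range (k+1+1), ((v i)^j / (j.factorial : ℝ)) • h j 0)) := by
    simp only [_root_.sub_sub_cancel, Finset.smul_sum]
    rw [Finset.sum_comm, Finset.sum_range]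
    have : ∀ j : Fin (k+1+1), ∑ i, a i • ((v i)^(j:ℕ) / ((j:ℕ).factorial : ℝ)) • h j 0
        = if j = 1 then h 1 0 else 0 := by
      intro j
      have h1 : ∑ i, a i • ((v i)^(j:ℕ) / ((j:ℕ).factorial : ℝ)) • h j 0
        = ((∑ i, a i * (v i)^(j:ℕ)) / ((j:ℕ).factorial : ℝ)) • h j 0 := by
        rw [Finset.sum_div, Finset.sum_smul]
        refine Finset.sum_congr rfl fun i _ => ?_
        rw [smul_smul, mul_div_assoc]
      rw [h1, hav j]
      split_ifs with hj
      · subst hj; simp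
      · simp
    rw [Finset.sum_congr rfl fun j _ => this j]
    simp
  rw [e]
  calc _ ≤ ∑ i, |a i| * (S + I) := by
        refine (norm_sum_le _ _).trans (Finset.sum_le_sum fun i _ => ?_)
        rw [norm_smul, Real.norm_eq_abs]
        gcongr
        exact (norm_sub_le _ _).trans (add_le_add (hS _ (hv i)) (hT _ (hv i)))
    _ ≤ _ := by rw [← Finset.sum_mul]; gcongr; linarith

theorem aux_scale {m : ℕ} (f : EuclideanSpace ℝ (Fin m) → ℝ≥0∞) (hf : Measurable f)
    (x : EuclideanSpace ℝ (Fin m)) (ρ : ℝ) (hρ : 0 < ρ) :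
    ∫⁻ y in Metric.ball (0 : EuclideanSpace ℝ (Fin m)) 1, f (x + ρ • y)
      = volume (Metric.ball (0 : EuclideanSpace ℝ (Fin m)) 1) *
        ((volume (Metric.ball x ρ))⁻¹ * ∫⁻ z in Metric.ball x ρ, f z) := by
  have h1 : ∫⁻ y in Metric.ball (0 : EuclideanSpace ℝ (Fin m)) 1, f (x + ρ • y)
      = ENNReal.ofReal ((ρ^m)⁻¹) * ∫⁻ z in Metric.ball x ρ, f z := by
    rw [← lintegral_indicator Metric.isOpen_ball.measurableSet,
      ← lintegral_indicator Metric.isOpen_ball.measurableSet]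
    set F := (Metric.ball x ρ).indicator f with hF
    have hFm : Measurable F := hf.indicator Metric.isOpen_ball.measurableSet
    rw [← lintegral_add_left_eq_self F x]
    have h2 := lintegral_map (μ := (volume : Measure (EuclideanSpace ℝ (Fin m))))
      (f := fun z => F (x + z)) (g := fun y => ρ • y) (by fun_prop) (by fun_prop)
    rw [Measure.map_addHaar_smul _ hρ.ne', lintegral_smul_measure, abs_of_pos (by positivity)] at h2
    simp only [finrank_euclideanSpace, Fintype.card_fin, smul_eq_mul] at h2
    rw [h2]
    refine lintegral_congr fun y => ?_
    have : y ∈ Metric.ball (0 : EuclideanSpace ℝ (Fin m)) 1 ↔ x + ρ • y ∈ Metric.ball x ρ := by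
      simp only [mem_ball_iff_norm, sub_zero, add_sub_cancel_left, norm_smul, Real.norm_eq_abs,
        abs_of_pos hρ]
      constructor
      · intro h; nlinarith
      · intro h; by_contra! h'; nlinarith
    by_cases hy : y ∈ Metric.ball (0 : EuclideanSpace ℝ (Fin m)) 1
    · rw [Set.indicator_of_mem hy, hF, Set.indicator_of_mem (this.1 hy)]
    · rw [Set.indicator_of_notMem hy, hF, Set.indicator_of_notMem (fun h => hy (this.2 h))]
  rw [h1, Measure.addHaar_ball_of_pos _ x hρ, ← mul_assoc]
  congr 1
  have hb0 : volume (Metric.ball (0 : EuclideanSpace ℝ (Fin m)) 1) ≠ 0 :=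
    (Metric.measure_ball_pos _ _ one_pos).ne'
  have hbt : volume (Metric.ball (0 : EuclideanSpace ℝ (Fin m)) 1) ≠ ⊤ := measure_ball_lt_top.ne
  rw [ENNReal.mul_inv (Or.inr hbt) (Or.inr hb0), mul_left_comm, ENNReal.mul_inv_cancel hb0 hbt,
    mul_one, ENNReal.ofReal_inv_of_pos (by positivity)]
  simp

theorem aux_max {m : ℕ} (Ω : Set (EuclideanSpace ℝ (Fin m))) (hΩ : IsOpen Ω)
    (f : EuclideanSpace ℝ (Fin m) → ℝ≥0∞)
    (x : EuclideanSpace ℝ (Fin m)) (ρ : ℝ) (hρ : 0 < ρ) :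
    (volume (Metric.ball x ρ))⁻¹ * ∫⁻ z in Metric.ball x ρ, Ω.indicator f z ≤ maximalFn Ω f x := by
  rw [setLIntegral_indicator hΩ.measurableSet]
  exact le_iSup₂_of_le (f := fun (r : ℝ) (_ : 0 < r) =>
    (volume (Metric.ball x r))⁻¹ * ∫⁻ y in Ω ∩ Metric.ball x r, f y) ρ hρ le_rfl

theorem aux_one {m : ℕ} (Ω : Set (EuclideanSpace ℝ (Fin m))) (hΩ : IsOpen Ω)
    (f : EuclideanSpace ℝ (Fin m) → ℝ≥0∞) (hf : ContinuousOn f Ω)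
    (x : EuclideanSpace ℝ (Fin m)) (hx : x ∈ Ω) : f x ≤ maximalFn Ω f x := by
  refine le_of_forall_lt fun c hc => ?_
  obtain ⟨d, hcd, hdf⟩ := exists_between hc
  have hU : ∀ᶠ y in 𝓝 x, y ∈ Ω ∧ d < f y :=
    Filter.Eventually.and (hΩ.mem_nhds hx) ((hf.continuousAt (hΩ.mem_nhds hx)).eventually (lt_mem_nhds hdf))
  obtain ⟨ρ, hρ, hb⟩ := Metric.eventually_nhds_iff_ball.1 hU
  refine hcd.trans_le (le_trans ?_ (aux_max Ω hΩ f x ρ hρ))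
  have hb0 : volume (Metric.ball x ρ) ≠ 0 := (Metric.measure_ball_pos _ _ hρ).ne'
  have hbt : volume (Metric.ball x ρ) ≠ ⊤ := measure_ball_lt_top.ne
  calc d = (volume (Metric.ball x ρ))⁻¹ * ∫⁻ z in Metric.ball x ρ, d := by
        rw [setLIntegral_const, mul_left_comm, ENNReal.inv_mul_cancel hb0 hbt, mul_one]
    _ ≤ _ := by
        refine mul_le_mul_right ?_ _
        refine setLIntegral_mono' Metric.isOpen_ball.measurableSet fun y hy => ?_
        rw [Set.indicator_of_mem (hb y hy).1]
        exact (hb y hy).2.le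

theorem aux_point (k : ℕ) : ∃ A : ℝ, 0 < A ∧ ∀ (m ν : ℕ)
      (Ω : Set (EuclideanSpace ℝ (Fin m))), IsOpen Ω →
      ∀ (u : EuclideanSpace ℝ (Fin m) → EuclideanSpace ℝ (Fin ν)),
        ContDiffOn ℝ (k+2 : ℕ) u Ω → ∀ S : ℝ, (∀ y ∈ Ω, ‖u y‖ ≤ S) →
      ∀ (r : ℝ), 0 < r → ∀ x ∈ Ω, Metric.ball x r ⊆ Ω →
      ∀ y ∈ Metric.ball (0 : EuclideanSpace ℝ (Fin m)) 1,
        ENNReal.ofReal ‖fderivWithin ℝ u Ω x y‖ ≤ ENNReal.ofReal A *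
          (ENNReal.ofReal (S / r) + ENNReal.ofReal (r ^ (k + 1)) *
            ∫⁻ t in Set.Ioc (0:ℝ) 1, Ω.indicator (fun y =>
              ENNReal.ofReal ‖iteratedFDerivWithin ℝ (k+2) u Ω y‖) (x + t • r • y)) := by
  obtain ⟨A, hA, H⟩ := aux_landau k
  refine ⟨A, hA, ?_⟩
  intro m ν Ω hΩ u hu S hS r hr x hx hball y hy
  have hy1 : ‖y‖ < 1 := by simpa using hy
  set w := r • y with hw
  have hwn : ‖w‖ ≤ r := by
    rw [hw, norm_smul, Real.norm_eq_abs, abs_of_pos hr]; nlinarith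
  have hmem : ∀ t ∈ Set.Icc (0:ℝ) 1, x + t • w ∈ Ω := by
    intro t ht
    apply hball
    rw [mem_ball_iff_norm, add_sub_cancel_left, norm_smul, Real.norm_eq_abs, abs_of_nonneg ht.1,
      hw, norm_smul, Real.norm_eq_abs, abs_of_pos hr]
    have : t * (r * ‖y‖) ≤ 1 * (r * ‖y‖) := by gcongr; exact ht.2
    nlinarith
  have hl : ∀ t : ℝ, HasDerivAt (fun t : ℝ => x + t • w) w t := fun t => by
    simpa using ((hasDerivAt_id t).smul_const w).const_add x
  set h : ℕ → ℝ → EuclideanSpace ℝ (Fin ν) := fun j t =>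
    iteratedFDerivWithin ℝ j u Ω (x + t • w) (fun _ => w) with hh
  have hcont : ContinuousOn (fun t : ℝ => iteratedFDerivWithin ℝ (k+2) u Ω (x + t • w))
      (Set.Icc 0 1) :=
    (hu.continuousOn_iteratedFDerivWithin le_rfl hΩ.uniqueDiffOn).comp (by fun_prop) hmem
  have hd : ∀ j ≤ k+1, ∀ t ∈ Set.Icc (0:ℝ) 1, HasDerivAt (h j) (h (j+1) t) t := by
    intro j hj t ht
    have h1 : DifferentiableOn ℝ (iteratedFDerivWithin ℝ j u Ω) Ω :=
      hu.differentiableOn_iteratedFDerivWithin (by exact_mod_cast (by omega : j < k+2))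
        hΩ.uniqueDiffOn
    have h2 := ((h1 _ (hmem t ht)).hasFDerivWithinAt.hasFDerivAt (hΩ.mem_nhds (hmem t ht)))
    have h3 := h2.comp_hasDerivAt t (hl t)
    have h4 := (ContinuousMultilinearMap.apply ℝ (fun _ : Fin j => EuclideanSpace ℝ (Fin m))
      (EuclideanSpace ℝ (Fin ν)) (fun _ => w)).hasFDerivAt.comp_hasDerivAt t h3
    have e : h (j+1) t = (ContinuousMultilinearMap.apply ℝ
      (fun _ : Fin j => EuclideanSpace ℝ (Fin m))
      (EuclideanSpace ℝ (Fin ν)) (fun _ => w))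
      (fderivWithin ℝ (iteratedFDerivWithin ℝ j u Ω) Ω (x + t • w) w) := by
      simp only [hh, iteratedFDerivWithin_succ_apply_left]
      rfl
    rw [e]
    exact h4
  have hc : ContinuousOn (h (k+2)) (Set.Icc 0 1) :=
    (ContinuousMultilinearMap.apply ℝ (fun _ : Fin (k+2) => EuclideanSpace ℝ (Fin m))
      (EuclideanSpace ℝ (Fin ν)) (fun _ => w)).continuous.comp_continuousOn hcont
  have key := H _ h S hd hc (fun t ht => by simpa [hh] using hS _ (hmem t ht))
  have e1 : h 1 0 = r • fderivWithin ℝ u Ω x y := by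
    simp only [hh, zero_smul, add_zero]
    rw [iteratedFDerivWithin_one_apply (hΩ.uniqueDiffOn x hx)]
    simp [hw]
  set g : ℝ → ℝ := fun t => ‖iteratedFDerivWithin ℝ (k+2) u Ω (x + t • w)‖ with hg
  have hgi : IntervalIntegrable g volume 0 1 := by
    apply ContinuousOn.intervalIntegrable
    rw [Set.uIcc_of_le zero_le_one]; exact hcont.norm
  have hle : ∫ s in (0:ℝ)..1, ‖h (k+2) s‖ ≤ r^(k+2) * ∫ s in (0:ℝ)..1, g s := by
    rw [← intervalIntegral.integral_const_mul]
    refine intervalIntegral.integral_mono_on zero_le_one ?_ (hgi.const_mul _) ?_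
    · apply ContinuousOn.intervalIntegrable
      rw [Set.uIcc_of_le zero_le_one]; exact hc.norm
    · intro s hs
      refine (ContinuousMultilinearMap.le_opNorm _ _).trans ?_
      rw [Finset.prod_const, Finset.card_univ, Fintype.card_fin, mul_comm]
      gcongr
  set I := ∫ s in (0:ℝ)..1, g s with hI
  have hI0 : 0 ≤ I := intervalIntegral.integral_nonneg zero_le_one fun s _ => norm_nonneg _
  have hS0 : 0 ≤ S := (norm_nonneg _).trans (hS x hx)
  have hfin : ‖fderivWithin ℝ u Ω x y‖ ≤ A * (S / r + r^(k+1) * I) := by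
    rw [e1, norm_smul, Real.norm_eq_abs, abs_of_pos hr] at key
    have h5 : r * ‖fderivWithin ℝ u Ω x y‖ ≤ r * (A * (S / r + r^(k+1) * I)) := by
      calc _ ≤ A * (S + r^(k+2) * I) := key.trans (by gcongr)
        _ = _ := by field_simp; ring
    exact le_of_mul_le_mul_left h5 hr
  have hIe : ENNReal.ofReal I = ∫⁻ t in Set.Ioc (0:ℝ) 1, Ω.indicator (fun y =>
              ENNReal.ofReal ‖iteratedFDerivWithin ℝ (k+2) u Ω y‖) (x + t • w) := by
    rw [hI, intervalIntegral.integral_of_le zero_le_one,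
      ofReal_integral_eq_lintegral_ofReal
        ((intervalIntegrable_iff_integrableOn_Ioc_of_le zero_le_one).1 hgi)
        (Eventually.of_forall fun s => norm_nonneg _)]
    refine setLIntegral_congr_fun measurableSet_Ioc fun t ht => ?_
    simp only [Set.indicator_of_mem (hmem t ⟨ht.1.le, ht.2⟩), hg]
  rw [← hIe, ← ENNReal.ofReal_mul (by positivity), ← ENNReal.ofReal_add (by positivity)
    (by positivity), ← ENNReal.ofReal_mul hA.le]
  exact ENNReal.ofReal_le_ofReal hfin

/-- Maximal-function form of the Sobolev representation bound (from the proof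
of Proposition 3.4). -/
theorem sobolev_representation_maximal (m k : ℕ) (hm : 1 ≤ m) (hk : 1 ≤ k) :
    ∃ C : ℝ, 0 < C ∧ ∀ (ν : ℕ), 1 ≤ ν →
      ∀ (Ω : Set (EuclideanSpace ℝ (Fin m))), IsOpen Ω →
      ∀ (u : EuclideanSpace ℝ (Fin m) → EuclideanSpace ℝ (Fin ν)),
        ContDiffOn ℝ k u Ω → Bornology.IsBounded (u '' Ω) →
      ∀ (r : ℝ), 0 < r → ∀ x ∈ Ω, Metric.ball x r ⊆ Ω →
        ENNReal.ofReal ‖fderivWithin ℝ u Ω x‖ ≤ ENNReal.ofReal C *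
          (ENNReal.ofReal (sSup ((fun y => ‖u y‖) '' Ω) / r)
            + ENNReal.ofReal (r ^ (k - 1)) *
                maximalFn Ω
                  (fun y => ENNReal.ofReal ‖iteratedFDerivWithin ℝ k u Ω y‖) x) := by
  obtain rfl | ⟨k, rfl⟩ : k = 1 ∨ ∃ l, k = l + 2 := by
    rcases k with _ | _ | l
    · omega
    · exact Or.inl rfl
    · exact Or.inr ⟨l, rfl⟩
  · refine ⟨1, one_pos, ?_⟩
    intro ν _ Ω hΩ u hu _ r hr x hx _
    have hc : ContinuousOn (fun y => ENNReal.ofReal ‖iteratedFDerivWithin ℝ 1 u Ω y‖) Ω :=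
      ENNReal.continuous_ofReal.comp_continuousOn
        (hu.continuousOn_iteratedFDerivWithin le_rfl hΩ.uniqueDiffOn).norm
    have h1 := aux_one Ω hΩ _ hc x hx
    simp only [norm_iteratedFDerivWithin_one u (hΩ.uniqueDiffOn x hx)] at h1
    refine h1.trans ?_
    simp
  obtain ⟨A, hA, H⟩ := aux_point k
  refine ⟨A * 8^(m+1), by positivity, ?_⟩
  intro ν _ Ω hΩ u hu hb r hr x hx hball
  set S := sSup ((fun y => ‖u y‖) '' Ω) with hSdef
  have hS : ∀ y ∈ Ω, ‖u y‖ ≤ S := by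
    intro y hy
    refine le_csSup ?_ ⟨y, hy, rfl⟩
    obtain ⟨R, hR⟩ := hb.exists_norm_le
    refine ⟨R, ?_⟩
    rintro _ ⟨z, hz, rfl⟩
    exact hR _ ⟨z, hz, rfl⟩
  set f0 : EuclideanSpace ℝ (Fin m) → ℝ≥0∞ :=
    fun y => ENNReal.ofReal ‖iteratedFDerivWithin ℝ (k+2) u Ω y‖ with hf0
  set L := fderivWithin ℝ u Ω x with hL
  set B := Metric.ball (0 : EuclideanSpace ℝ (Fin m)) 1 with hB
  set V := volume B with hV
  have hV0 : V ≠ 0 := (Metric.measure_ball_pos _ _ one_pos).ne'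
  have hVt : V ≠ ⊤ := measure_ball_lt_top.ne
  have hpt := H m ν Ω hΩ u hu S hS r hr x hx hball
  rw [show k + 2 - 1 = k + 1 by omega]
  have hfm : Measurable (Ω.indicator f0) := by
    classical
    have hc : ContinuousOn f0 Ω :=
      ENNReal.continuous_ofReal.comp_continuousOn
        (hu.continuousOn_iteratedFDerivWithin le_rfl hΩ.uniqueDiffOn).norm
    have := hc.measurable_piecewise (g := fun _ => 0) continuousOn_const hΩ.measurableSet
    convert this using 1
    ext y; by_cases hy : y ∈ Ω <;> simp [hy]
  by_cases hL0 : ‖L‖ = 0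
  · rw [hL0]; simp
  have hLp : 0 < ‖L‖ := lt_of_le_of_ne (norm_nonneg _) (Ne.symm hL0)
  obtain ⟨e, he1, he2⟩ := L.exists_lt_apply_of_lt_opNorm (half_lt_self hLp)
  set c := (1/2 : ℝ) • e with hc
  have hcn : ‖c‖ < 1/2 := by
    rw [hc, norm_smul]; norm_num; linarith
  have hLc : ‖L‖/4 ≤ ‖L c‖ := by
    rw [hc, map_smul, norm_smul]; norm_num; linarith
  set B' := Metric.ball c (1/8) with hB'
  have hsub : B' ⊆ B := by
    apply Metric.ball_subset_ball'
    rw [dist_zero_right]; linarith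
  have hlow : ∀ y ∈ B', ENNReal.ofReal (‖L‖/8) ≤ ENNReal.ofReal ‖L y‖ := by
    intro y hy
    apply ENNReal.ofReal_le_ofReal
    have h1 : ‖L (c - y)‖ ≤ ‖L‖ * (1/8) := by
      refine (L.le_opNorm _).trans ?_
      have := mem_ball_iff_norm'.1 hy
      gcongr
    have h2 : ‖L c‖ ≤ ‖L (c - y)‖ + ‖L y‖ := by
      have := norm_add_le (L (c - y)) (L y)
      rwa [← map_add, sub_add_cancel] at this
    linarith
  set M := maximalFn Ω f0 x with hM
  set X := ENNReal.ofReal (S / r) + ENNReal.ofReal (r ^ (k + 1)) * M with hX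
  have hmain : ENNReal.ofReal (‖L‖/8) * volume B' ≤ ENNReal.ofReal A * (V * X) := by
    have hswap : ∫⁻ y in B, ∫⁻ t in Set.Ioc (0:ℝ) 1, Ω.indicator f0 (x + t • r • y) ≤ V * M := by
      rw [lintegral_lintegral_swap (by
        apply Measurable.aemeasurable
        apply hfm.comp
        fun_prop)]
      calc _ ≤ ∫⁻ t in Set.Ioc (0:ℝ) 1, V * M := by
            refine setLIntegral_mono' measurableSet_Ioc fun t ht => ?_
            simp only [smul_smul]
            rw [aux_scale _ hfm x (t * r) (mul_pos ht.1 hr)]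
            gcongr
            exact aux_max Ω hΩ f0 x _ (mul_pos ht.1 hr)
        _ = V * M := by simp
    calc _ = ∫⁻ y in B', ENNReal.ofReal (‖L‖/8) := by rw [setLIntegral_const]
      _ ≤ ∫⁻ y in B', ENNReal.ofReal ‖L y‖ :=
          setLIntegral_mono' Metric.isOpen_ball.measurableSet hlow
      _ ≤ ∫⁻ y in B, ENNReal.ofReal ‖L y‖ := lintegral_mono_set hsub
      _ ≤ ∫⁻ y in B, ENNReal.ofReal A *
          (ENNReal.ofReal (S / r) + ENNReal.ofReal (r ^ (k + 1)) *
            ∫⁻ t in Set.Ioc (0:ℝ) 1, Ω.indicator f0 (x + t • r • y)) :=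
          setLIntegral_mono' Metric.isOpen_ball.measurableSet hpt
      _ = ENNReal.ofReal A * (ENNReal.ofReal (S / r) * V + ENNReal.ofReal (r ^ (k + 1)) *
            ∫⁻ y in B, ∫⁻ t in Set.Ioc (0:ℝ) 1, Ω.indicator f0 (x + t • r • y)) := by
          rw [lintegral_const_mul' _ _ ENNReal.ofReal_ne_top, lintegral_add_left measurable_const,
            setLIntegral_const, lintegral_const_mul' _ _ ENNReal.ofReal_ne_top]
      _ ≤ ENNReal.ofReal A * (ENNReal.ofReal (S / r) * V + ENNReal.ofReal (r ^ (k + 1)) *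
            (V * M)) := by gcongr
      _ = _ := by rw [hX]; ring
  rw [hB', Measure.addHaar_ball_of_pos _ _ (by norm_num : (0:ℝ) < 1/8), ← hB, ← hV, ← mul_assoc,
    mul_comm V X, ← mul_assoc, ENNReal.mul_le_mul_iff_left hV0 hVt] at hmain
  simp only [finrank_euclideanSpace, Fintype.card_fin] at hmain
  rw [← ENNReal.ofReal_mul (by positivity)] at hmain
  calc ENNReal.ofReal ‖L‖ = ENNReal.ofReal (8^(m+1)) * ENNReal.ofReal (‖L‖/8 * (1/8)^m) := by
        rw [← ENNReal.ofReal_mul (by positivity)]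
        congr 1
        rw [one_div, inv_pow, pow_succ]; field_simp
    _ ≤ ENNReal.ofReal (8^(m+1)) * (ENNReal.ofReal A * X) := by gcongr
    _ = _ := by rw [ENNReal.ofReal_mul hA.le]; ring
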